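/- Let t > 0 and, for 0 < s₁ < s₂, define λ_{s₁,s₂}(y₁, y₂) = y₁ y₂/(s₁(s₂−s₁)) − ( y₂²/(s₂−s₁)² − 1/(s₂−s₁) ). Then the iterated integral ∫_0^t ∫_{s₁}^t ( ∫_{ℝ²} |λ_{s₁,s₂}(y₁,y₂)| · q_{s₁}(y₁) q_{s₂−s₁}(y₂) dy₁ dy₂ ) ds₂ ds₁ is infinite (equals +∞). -/

import Mathlib

/-!
For fixed `s₁` and `s₂` put `a = s₁`, `b = s₂ - s₁` and `g y = y² / b² - 1 / b`. The kernel `q_b` and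
the function `g` are even, so averaging the inner integral over `y₂ ↦ -y₂` removes the term linear in
`y₂`: for every `y₁`,
`∫ |y₁ y₂ / (a b) - g y₂| q_b(y₂) dy₂ ≥ ∫ |g| q_b` (`integral_abs_le_inner`).
Scaling `y₂ = √b z` turns the right-hand side into `C / b`, where `C = ∫ |z² - 1| q₁(z) dz > 0`
(`integral_scaling`, `const_pos`), and integrating against the probability density `q_a` preserves
this bound (`lower_bound`). Since `1 / (s₂ - s₁)` is not integrable near `s₂ = s₁`, the integral over
`s₂` is already infinite for each `s₁ ∈ (0, t)`.
-/

open MeasureTheory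

/-- The heat kernel `q_t(x) = exp(−x²/(2t))/√(2πt)`. -/
noncomputable def heatK (t x : ℝ) : ℝ := Real.exp (-x ^ 2 / (2 * t)) / Real.sqrt (2 * Real.pi * t)

lemma heatK_nonneg (t x : ℝ) : 0 ≤ heatK t x := by
  unfold heatK; positivity

lemma heatK_neg (t x : ℝ) : heatK t (-x) = heatK t x := by
  simp [heatK]

lemma heatK_eq (t x : ℝ) :
    heatK t x = (Real.sqrt (2 * Real.pi * t))⁻¹ * Real.exp (-(1 / (2 * t)) * x ^ 2) := by
  unfold heatK
  rw [div_eq_inv_mul]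
  congr 2
  ring

lemma integrable_heatK {t : ℝ} (ht : 0 < t) : Integrable (heatK t) := by
  simp_rw [funext (heatK_eq t)]
  exact (integrable_exp_neg_mul_sq (by positivity)).const_mul _

lemma integrable_id_mul_heatK {t : ℝ} (ht : 0 < t) : Integrable (fun x => x * heatK t x) := by
  simp_rw [heatK_eq t, mul_left_comm _ (Real.sqrt (2 * Real.pi * t))⁻¹]
  exact (integrable_mul_exp_neg_mul_sq (by positivity)).const_mul _

lemma integrable_sq_mul_heatK {t : ℝ} (ht : 0 < t) : Integrable (fun x => x ^ 2 * heatK t x) := by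
  simp_rw [heatK_eq t, mul_left_comm _ (Real.sqrt (2 * Real.pi * t))⁻¹]
  have := integrable_rpow_mul_exp_neg_mul_sq (b := 1 / (2 * t)) (by positivity) (s := 2) (by norm_num)
  simp only [Real.rpow_two] at this
  exact this.const_mul _

lemma integral_heatK {t : ℝ} (ht : 0 < t) : ∫ x, heatK t x = 1 := by
  have := ProbabilityTheory.integral_gaussianPDFReal_eq_one 0 (v := ⟨t, ht.le⟩)
    (fun h => ht.ne' (congrArg NNReal.toReal h))
  rw [← this]
  congr 1
  ext x
  simp only [heatK, ProbabilityTheory.gaussianPDFReal, sub_zero]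
  rw [div_eq_inv_mul]
  rfl

lemma integrable_inner {b : ℝ} (hb : 0 < b) (c d e : ℝ) :
    Integrable (fun y => |c * y - (y ^ 2 / d - e)| * heatK b y) := by
  have h : Integrable (fun y => c * (y * heatK b y) - d⁻¹ * (y ^ 2 * heatK b y) + e * heatK b y) :=
    (((integrable_id_mul_heatK hb).const_mul c).sub
      ((integrable_sq_mul_heatK hb).const_mul d⁻¹)).add ((integrable_heatK hb).const_mul e)
  refine h.abs.congr (Filter.Eventually.of_forall fun y => ?_)
  simp only
  rw [← abs_of_nonneg (heatK_nonneg b y), ← abs_mul, abs_of_nonneg (heatK_nonneg b y)]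
  congr 1
  ring

/-- The linear term can only increase the mean absolute value: the two integrals with slopes `c` and
`-c` agree by symmetry of the kernel, and `|u - v| + |-u - v| ≥ 2 |v|`. -/
lemma integral_abs_le_inner {b : ℝ} (hb : 0 < b) (c d e : ℝ) :
    ∫ y, |y ^ 2 / d - e| * heatK b y ≤ ∫ y, |c * y - (y ^ 2 / d - e)| * heatK b y := by
  have hsymm : ∫ y, |-c * y - (y ^ 2 / d - e)| * heatK b y
      = ∫ y, |c * y - (y ^ 2 / d - e)| * heatK b y := by
    rw [← integral_neg_eq_self]
    simp [heatK_neg]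
  have h0 : Integrable (fun y => |y ^ 2 / d - e| * heatK b y) := by
    refine (integrable_inner hb 0 d e).congr (Filter.Eventually.of_forall fun y => ?_)
    simp only [zero_mul, zero_sub, abs_neg]
  have hmono : ∫ y, 2 * (|y ^ 2 / d - e| * heatK b y)
      ≤ ∫ y, (|c * y - (y ^ 2 / d - e)| * heatK b y + |-c * y - (y ^ 2 / d - e)| * heatK b y) := by
    refine integral_mono (h0.const_mul 2)
      ((integrable_inner hb c d e).add (integrable_inner hb (-c) d e)) fun y => ?_
    simp only
    rw [← add_mul, ← mul_assoc]
    refine mul_le_mul_of_nonneg_right ?_ (heatK_nonneg b y)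
    have := abs_add_le (c * y - (y ^ 2 / d - e)) (-c * y - (y ^ 2 / d - e))
    rw [show c * y - (y ^ 2 / d - e) + (-c * y - (y ^ 2 / d - e)) = -(2 * (y ^ 2 / d - e)) by ring,
      abs_neg, abs_mul, abs_two] at this
    exact this
  rw [integral_const_mul, integral_add (integrable_inner hb c d e) (integrable_inner hb (-c) d e),
    hsymm] at hmono
  linarith

lemma integral_scaling {b : ℝ} (hb : 0 < b) :
    ∫ y, |y ^ 2 / b ^ 2 - 1 / b| * heatK b y = (∫ z : ℝ, |z ^ 2 - 1| * heatK 1 z) / b := by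
  have hs : 0 < Real.sqrt b := Real.sqrt_pos.2 hb
  have h := Measure.integral_comp_mul_left
    (fun y => |y ^ 2 / b ^ 2 - 1 / b| * heatK b y) (Real.sqrt b)
  rw [abs_of_pos (inv_pos.2 hs), smul_eq_mul] at h
  have hpt : ∀ z, |(Real.sqrt b * z) ^ 2 / b ^ 2 - 1 / b| * heatK b (Real.sqrt b * z)
      = (Real.sqrt b)⁻¹ * ((|z ^ 2 - 1| * heatK 1 z) / b) := by
    intro z
    have h1 : (Real.sqrt b * z) ^ 2 / b ^ 2 - 1 / b = (z ^ 2 - 1) / b := by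
      rw [mul_pow, Real.sq_sqrt hb.le]; field_simp
    have h2 : heatK b (Real.sqrt b * z) = (Real.sqrt b)⁻¹ * heatK 1 z := by
      unfold heatK
      rw [mul_pow, Real.sq_sqrt hb.le, Real.sqrt_mul (by positivity) b, mul_one, mul_one,
        show -(b * z ^ 2) / (2 * b) = -z ^ 2 / 2 by field_simp]
      field_simp
    rw [h1, h2, abs_div, abs_of_pos hb]
    ring
  simp_rw [hpt] at h
  rw [integral_const_mul, integral_div] at h
  exact (mul_left_cancel₀ (inv_pos.2 hs).ne' h).symm

lemma const_pos : 0 < ∫ z : ℝ, |z ^ 2 - 1| * heatK 1 z := by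
  have hint : Integrable (fun z => |z ^ 2 - 1| * heatK 1 z) := by
    refine (integrable_inner one_pos 0 1 1).congr (Filter.Eventually.of_forall fun y => ?_)
    simp only [zero_mul, zero_sub, abs_neg, div_one]
  rw [integral_pos_iff_support_of_nonneg
    (fun z => mul_nonneg (abs_nonneg _) (heatK_nonneg 1 z)) hint]
  refine lt_of_lt_of_le ?_ (measure_mono (s := Set.Ioo (2 : ℝ) 3) fun z hz => ?_)
  · rw [Real.volume_Ioo]; norm_num
  · have h1 : 0 < z ^ 2 - 1 := by nlinarith [hz.1]
    have h2 : 0 < heatK 1 z := by unfold heatK; positivity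
    exact (mul_pos (abs_pos.2 h1.ne') h2).ne'

/-- Integrability in `y₁` of the inner integral; without it the outer Bochner integral would take
its junk value `0`. -/
lemma integrable_outer {a b : ℝ} (ha : 0 < a) (hb : 0 < b) (c d e : ℝ) :
    Integrable (fun y₁ => ∫ y₂, |y₁ * y₂ / c - (y₂ ^ 2 / d - e)| * heatK a y₁ * heatK b y₂) := by
  have h : Integrable (fun p : ℝ × ℝ => c⁻¹ * ((p.1 * heatK a p.1) * (p.2 * heatK b p.2))
      - d⁻¹ * (heatK a p.1 * (p.2 ^ 2 * heatK b p.2)) + e * (heatK a p.1 * heatK b p.2))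
      (volume.prod volume) :=
    ((((integrable_id_mul_heatK ha).mul_prod (integrable_id_mul_heatK hb)).const_mul c⁻¹).sub
      (((integrable_heatK ha).mul_prod (integrable_sq_mul_heatK hb)).const_mul d⁻¹)).add
      (((integrable_heatK ha).mul_prod (integrable_heatK hb)).const_mul e)
  have h' : Integrable (fun p : ℝ × ℝ => |p.1 * p.2 / c - (p.2 ^ 2 / d - e)|
      * heatK a p.1 * heatK b p.2) (volume.prod volume) := by
    refine h.abs.congr (Filter.Eventually.of_forall fun p => ?_)
    simp only
    rw [mul_assoc |_|]
    nth_rw 2 [← abs_of_nonneg (mul_nonneg (heatK_nonneg a p.1) (heatK_nonneg b p.2))]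
    rw [← abs_mul]
    congr 1
    ring
  exact h'.integral_prod_left

lemma lower_bound {a b : ℝ} (ha : 0 < a) (hb : 0 < b) :
    (∫ z : ℝ, |z ^ 2 - 1| * heatK 1 z) / b ≤ ∫ y₁ : ℝ, ∫ y₂ : ℝ,
      |y₁ * y₂ / (a * b) - (y₂ ^ 2 / b ^ 2 - 1 / b)| * heatK a y₁ * heatK b y₂ := by
  rw [← integral_scaling hb]
  set I := ∫ y, |y ^ 2 / b ^ 2 - 1 / b| * heatK b y
  calc I = ∫ y₁, heatK a y₁ * I := by rw [integral_mul_const, integral_heatK ha, one_mul]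
    _ ≤ _ := by
      refine integral_mono ((integrable_heatK ha).mul_const I) (integrable_outer ha hb _ _ _)
        fun y₁ => ?_
      have heq : ∫ y₂, |y₁ * y₂ / (a * b) - (y₂ ^ 2 / b ^ 2 - 1 / b)| * heatK a y₁ * heatK b y₂
          = heatK a y₁ *
            ∫ y₂, |y₁ / (a * b) * y₂ - (y₂ ^ 2 / b ^ 2 - 1 / b)| * heatK b y₂ := by
        rw [← integral_const_mul]
        congr 1
        ext y₂
        rw [mul_div_right_comm]
        ring
      simp only
      rw [heq]
      exact mul_le_mul_of_nonneg_left (integral_abs_le_inner hb _ _ _) (heatK_nonneg a y₁)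

lemma lintegral_div_sub_eq_top {s t C : ℝ} (hst : s < t) (hC : 0 < C) :
    ∫⁻ x in Set.Ioo s t, ENNReal.ofReal (C / (x - s)) = ⊤ := by
  by_contra hne
  have hmeas : AEStronglyMeasurable (fun x => C / (x - s)) (volume.restrict (Set.Ioo s t)) :=
    (measurable_const.div (measurable_id.sub_const s)).aestronglyMeasurable
  have hnn : 0 ≤ᵐ[volume.restrict (Set.Ioo s t)] fun x => C / (x - s) := by
    filter_upwards [ae_restrict_mem measurableSet_Ioo] with x hx
    exact div_nonneg hC.le (sub_nonneg.2 hx.1.le)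
  have hint : IntegrableOn (fun x => C / (x - s)) (Set.Ioo s t) :=
    ⟨hmeas, (hasFiniteIntegral_iff_ofReal hnn).2 (lt_top_iff_ne_top.2 hne)⟩
  have h2 : IntervalIntegrable (fun x => (x - s)⁻¹) volume s t := by
    rw [intervalIntegrable_iff_integrableOn_Ioo_of_le hst.le]
    refine (hint.const_mul C⁻¹).congr (Filter.Eventually.of_forall fun x => ?_)
    simp only
    rw [div_eq_mul_inv, inv_mul_cancel_left₀ hC.ne']
  rw [intervalIntegrable_sub_inv_iff] at h2
  rcases h2 with h2 | h2
  · exact hst.ne h2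
  · exact h2 Set.left_mem_uIcc

/-- for `t > 0`, with
`λ_{s₁,s₂}(y₁,y₂) = y₁y₂/(s₁(s₂−s₁)) − (y₂²/(s₂−s₁)² − 1/(s₂−s₁))`, the iterated integral
`∫_0^t ∫_{s₁}^t (∫_{ℝ²} |λ_{s₁,s₂}(y₁,y₂)| q_{s₁}(y₁) q_{s₂−s₁}(y₂) dy₁ dy₂) ds₂ ds₁ = +∞`. -/
theorem lintegral_abs_Lambda_eq_top (t : ℝ) (ht : 0 < t) :
    ∫⁻ s₁ in Set.Ioo (0 : ℝ) t, ∫⁻ s₂ in Set.Ioo s₁ t,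
        ENNReal.ofReal
          (∫ y₁ : ℝ, ∫ y₂ : ℝ,
            |y₁ * y₂ / (s₁ * (s₂ - s₁)) - (y₂ ^ 2 / (s₂ - s₁) ^ 2 - 1 / (s₂ - s₁))|
              * heatK s₁ y₁ * heatK (s₂ - s₁) y₂)
      = ⊤ := by
  have hinner : ∀ s₁ ∈ Set.Ioo (0 : ℝ) t, ∫⁻ s₂ in Set.Ioo s₁ t,
        ENNReal.ofReal
          (∫ y₁ : ℝ, ∫ y₂ : ℝ,
            |y₁ * y₂ / (s₁ * (s₂ - s₁)) - (y₂ ^ 2 / (s₂ - s₁) ^ 2 - 1 / (s₂ - s₁))|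
              * heatK s₁ y₁ * heatK (s₂ - s₁) y₂) = ⊤ := by
    intro s₁ hs₁
    rw [eq_top_iff, ← lintegral_div_sub_eq_top hs₁.2 const_pos]
    exact setLIntegral_mono' measurableSet_Ioo fun s₂ hs₂ =>
      ENNReal.ofReal_le_ofReal (lower_bound hs₁.1 (sub_pos.2 hs₂.1))
  rw [setLIntegral_congr_fun measurableSet_Ioo hinner, setLIntegral_const, Real.volume_Ioo,
    sub_zero]
  exact ENNReal.top_mul (ENNReal.ofReal_pos.2 ht).ne'
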